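/- Tracking collections converge to a delta distribution on the curve (flat-space version of Geroch–Weatherall Theorem, main theorem): let γ : ℝ → ℝ⁴ be smooth with η(γ'(t), γ'(t)) = 1 and γ'(t) future timelike for all t, and let 𝒞 be a collection of smooth fields T : ℝ⁴ → Matrix (Fin 4) (Fin 4) ℝ with symmetric values, each satisfying the dominant energy condition at every point and each divergence-free. If 𝒞 tracks γ, then there exist sequences cₙ > 0 of reals and Tₙ ∈ 𝒞 such that for every smooth, compactly supported field x : ℝ⁴ → Matrix (Fin 4) (Fin 4) ℝ with symmetric values, cₙ * ∫_{ℝ⁴} ⟨Tₙ(p), x(p)⟩ dp converges (as n → ∞) to ∫_ℝ Σᵢⱼ γ'(t) i * γ'(t) j * x(γ(t)) i j dt. -/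

import Mathlib

open Matrix MeasureTheory Filter Topology

noncomputable section

abbrev Vec4 : Type := Fin 4 → ℝ
abbrev Mat4 : Type := Matrix (Fin 4) (Fin 4) ℝ

/-- The Minkowski inner product on ℝ⁴. -/
def mink (x y : Vec4) : ℝ := x 0 * y 0 - x 1 * y 1 - x 2 * y 2 - x 3 * y 3

/-- The matrix diag(1,-1,-1,-1). -/
def E : Mat4 := Matrix.diagonal ![1, -1, -1, -1]

def FutureCausal (x : Vec4) : Prop := 0 ≤ mink x x ∧ 0 ≤ x 0
def FutureTimelike (x : Vec4) : Prop := 0 < mink x x ∧ 0 < x 0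
def FutureNull (x : Vec4) : Prop := x ≠ 0 ∧ mink x x = 0 ∧ 0 < x 0
def UnitTimelike (x : Vec4) : Prop := FutureTimelike x ∧ mink x x = 1

/-- The dominant energy condition for a matrix. -/
def DEC (T : Mat4) : Prop :=
  ∀ ξ ζ : Vec4, FutureCausal ξ → FutureCausal ζ → 0 ≤ ∑ i, ∑ j, ξ i * T i j * ζ j

/-- ⟨T, x⟩ = Σᵢⱼ T i j * x i j. -/
def minner (T x : Mat4) : ℝ := ∑ i, ∑ j, T i j * x i j

/-- The cone D of finite sums of symmetrized products of future causal vectors. -/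
def coneD : Set Mat4 :=
  { x | ∃ (n : ℕ) (ξ ζ : Fin n → Vec4),
      (∀ k, FutureCausal (ξ k)) ∧ (∀ k, FutureCausal (ζ k)) ∧
      x = ∑ k, (1/2 : ℝ) • (vecMulVec (ξ k) (ζ k) + vecMulVec (ζ k) (ξ k)) }

/-- A symmetric matrix is generic if it lies in the interior of D, taken within
the space of symmetric matrices. -/
def Generic (x : Mat4) : Prop :=
  ∃ h : xᵀ = x, (⟨x, h⟩ : { A : Mat4 // Aᵀ = A }) ∈
    interior { A : { A : Mat4 // Aᵀ = A } | A.val ∈ coneD }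

/-- Partial derivative in the a-th coordinate direction. -/
def pd (a : Fin 4) (f : Vec4 → ℝ) (p : Vec4) : ℝ := fderiv ℝ f p (Pi.single a 1)

def SmoothMatField (T : Vec4 → Mat4) : Prop := ∀ a b, ContDiff ℝ (⊤ : ℕ∞) fun p => T p a b
def SymValued (T : Vec4 → Mat4) : Prop := ∀ p, (T p)ᵀ = T p
def DivFree (T : Vec4 → Mat4) : Prop := ∀ p b, ∑ a, pd a (fun q => T q a b) p = 0

/-- A collection of fields tracks a curve. -/
def Tracks (C : Set (Vec4 → Mat4)) (γ : ℝ → Vec4) : Prop :=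
  ∀ x : Vec4 → Mat4, SmoothMatField x → HasCompactSupport x → SymValued x →
    (∃ O : Set Vec4, IsOpen O ∧ Set.range γ ⊆ O ∧ ∀ p ∈ O, x p ∈ coneD) →
    (∃ t₀ : ℝ, Generic (x (γ t₀))) →
    ∃ T ∈ C, 0 < ∫ p, minner (T p) (x p)

/-- Maxwell stress-energy tensor of a field strength matrix. -/
def maxwellT (F : Mat4) : Mat4 :=
  F * E * F - ((1/4 : ℝ) * (E * F * E * F).trace) • E

/-- Source-free Maxwell equations. -/
def SolvesMaxwell (F : Vec4 → Mat4) : Prop :=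
  (∀ p b, ∑ a, E a a * pd a (fun q => F q a b) p = 0) ∧
  (∀ p a b c, pd a (fun q => F q b c) p + pd b (fun q => F q c a) p
      + pd c (fun q => F q a b) p = 0)

/-- Klein–Gordon stress-energy tensor. -/
def kgT (φ : Vec4 → ℝ) (m : ℝ) (p : Vec4) : Mat4 :=
  Matrix.of fun a b =>
    pd a φ p * pd b φ p
      - (1/2 : ℝ) * E a b * ((∑ c, E c c * (pd c φ p)^2) - m^2 * (φ p)^2)

/-- Mass-m Klein–Gordon equation. -/
def SolvesKG (φ : Vec4 → ℝ) (m : ℝ) : Prop :=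
  ∀ p, pd 0 (pd 0 φ) p - pd 1 (pd 1 φ) p - pd 2 (pd 2 φ) p - pd 3 (pd 3 φ) p
    + m^2 * φ p = 0

open scoped ContDiff Manifold

/-!
By the dominant energy condition the energy density `T 0 0` controls every component of `T`, so
rescaled members of the collection can be chosen with unit energy along the curve and vanishing
energy on every compact set away from it. A field of this kind is blind in the limit to test fields
that vanish on the curve, by squeezing against energies. It is also blind to gradients, being
divergence-free: the gradient of `(p - y (p 0)) x(p)` shows that `x` may be replaced by its
contraction with the velocity, in each index in turn, which leaves only the energy. Gradients of
functions of time fix the limiting energy as the constant density `ds` in coordinate time `s`.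
Applied to gradients `∇(G(s) eᵢ)`, the limit formula makes the velocity constant: the curve is a
geodesic.
-/

/-! ### The dual energy cone -/

/-- The entrywise `ℓ¹` norm of a matrix, the scale on which `coneD` and `DEC` are compared with the
energy direction `single 0 0 1`. -/
def absSum (A : Mat4) : ℝ := ∑ i, ∑ j, |A i j|

lemma continuous_absSum : Continuous absSum :=
  continuous_finsetSum _ fun i _ => continuous_finsetSum _ fun j _ =>
    (continuous_id.matrix_elem i j).abs

lemma absSum_zero : absSum 0 = 0 := by simp [absSum]

lemma FutureCausal.smul {x : Vec4} (hx : FutureCausal x) {c : ℝ} (hc : 0 ≤ c) :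
    FutureCausal (c • x) := by
  have hmink : mink (c • x) (c • x) = c ^ 2 * mink x x := by
    simp only [mink, Pi.smul_apply, smul_eq_mul]
    ring
  exact ⟨hmink ▸ mul_nonneg (sq_nonneg c) hx.1, mul_nonneg hc hx.2⟩

lemma futureCausal_single_zero_add_smul_single (i : Fin 4) {σ : ℝ} (hσ : |σ| = 1) :
    FutureCausal (Pi.single 0 1 + σ • Pi.single i 1) := by
  rcases eq_or_eq_neg_of_abs_eq hσ with rfl | rfl <;> fin_cases i <;> constructor <;> simp [mink]

lemma futureCausal_single_zero : FutureCausal (Pi.single 0 1) := by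
  constructor <;> simp [mink]

lemma zero_mem_coneD : (0 : Mat4) ∈ coneD :=
  ⟨0, Fin.elim0, Fin.elim0, fun k => k.elim0, fun k => k.elim0, by simp⟩

lemma add_mem_coneD {A B : Mat4} (hA : A ∈ coneD) (hB : B ∈ coneD) : A + B ∈ coneD := by
  obtain ⟨n, ξ, ζ, hξ, hζ, rfl⟩ := hA
  obtain ⟨m, ξ', ζ', hξ', hζ', rfl⟩ := hB
  refine ⟨n + m, Fin.append ξ ξ', Fin.append ζ ζ', fun k => ?_, fun k => ?_, ?_⟩
  · induction k using Fin.addCases <;> simp [hξ, hξ']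
  · induction k using Fin.addCases <;> simp [hζ, hζ']
  · simp [Fin.sum_univ_add]

lemma smul_mem_coneD {A : Mat4} (hA : A ∈ coneD) {c : ℝ} (hc : 0 ≤ c) : c • A ∈ coneD := by
  obtain ⟨n, ξ, ζ, hξ, hζ, rfl⟩ := hA
  refine ⟨n, fun k => c • ξ k, ζ, fun k => (hξ k).smul hc, hζ, ?_⟩
  rw [Finset.smul_sum]
  refine Finset.sum_congr rfl fun k _ => ?_
  rw [smul_vecMulVec, vecMulVec_smul, ← smul_add, smul_comm]

lemma sum_mem_coneD {ι : Type*} {s : Finset ι} {A : ι → Mat4} (hA : ∀ i ∈ s, A i ∈ coneD) :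
    ∑ i ∈ s, A i ∈ coneD :=
  Finset.sum_induction A (· ∈ coneD) (fun _ _ => add_mem_coneD) zero_mem_coneD hA

/-- The symmetrized product of two vectors, the generator of the cone `coneD`. -/
def symProd (ξ ζ : Vec4) : Mat4 := (1/2 : ℝ) • (vecMulVec ξ ζ + vecMulVec ζ ξ)

lemma symProd_mem_coneD {ξ ζ : Vec4} (hξ : FutureCausal ξ) (hζ : FutureCausal ζ) :
    symProd ξ ζ ∈ coneD :=
  ⟨1, fun _ => ξ, fun _ => ζ, fun _ => hξ, fun _ => hζ, by simp [symProd]⟩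

lemma symProd_single_single (i j : Fin 4) :
    symProd (Pi.single i 1) (Pi.single j 1) = (1/2 : ℝ) • (single i j 1 + single j i 1) := by
  simp only [symProd, ← single_eq_single_vecMulVec_single]

lemma single_zero_zero_mem_coneD {c : ℝ} (hc : 0 ≤ c) : (single 0 0 c : Mat4) ∈ coneD := by
  have h := smul_mem_coneD (symProd_mem_coneD futureCausal_single_zero futureCausal_single_zero) hc
  rwa [symProd_single_single, ← two_smul ℝ, smul_smul (1 / 2 : ℝ), one_div_mul_cancel two_ne_zero,
    one_smul, smul_single, smul_eq_mul, mul_one] at h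

-- Average the products of `e₀ ± eᵢ` with `e₀ ± σ eⱼ`: the mixed terms cancel.
lemma single_zero_zero_add_smul_symProd_mem_coneD (i j : Fin 4) {σ : ℝ} (hσ : |σ| = 1) :
    single 0 0 1 + σ • symProd (Pi.single i 1) (Pi.single j 1) ∈ coneD := by
  have hplus := symProd_mem_coneD (futureCausal_single_zero_add_smul_single i abs_one)
    (futureCausal_single_zero_add_smul_single j hσ)
  have hminus := symProd_mem_coneD
    (futureCausal_single_zero_add_smul_single i (σ := -1) (by simp))
    (futureCausal_single_zero_add_smul_single j (σ := -σ) (by rwa [abs_neg]))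
  convert smul_mem_coneD (add_mem_coneD hplus hminus) (c := 1/2) (by norm_num) using 1
  rw [single_eq_single_vecMulVec_single]
  ext a b
  simp only [symProd, vecMulVec_apply, Matrix.add_apply, Matrix.smul_apply, Pi.add_apply,
    Pi.smul_apply, smul_eq_mul]
  ring

lemma sum_smul_symProd_single {B : Mat4} (hB : Bᵀ = B) :
    ∑ i, ∑ j, B i j • symProd (Pi.single i 1) (Pi.single j 1) = B := by
  have hsum : ∑ i, ∑ j, single i j (B i j) = B := (matrix_eq_sum_single B).symm
  have hsum' : ∑ i, ∑ j, single j i (B i j) = B := by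
    have hcoeff (i j : Fin 4) : B i j = B j i := congrFun₂ hB j i
    rw [Finset.sum_comm]
    exact (Finset.sum_congr rfl fun j _ => Finset.sum_congr rfl fun i _ =>
      congrArg (single j i) (hcoeff i j)).trans hsum
  simp only [symProd_single_single, smul_comm (B _ _), smul_add (B _ _), smul_single, smul_eq_mul,
    mul_one, ← Finset.smul_sum, Finset.sum_add_distrib, hsum, hsum']
  rw [← two_smul ℝ, smul_smul, one_div_mul_cancel two_ne_zero, one_smul]

lemma add_single_zero_zero_mem_coneD {B : Mat4} (hB : Bᵀ = B) {c : ℝ}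
    (hc : absSum B ≤ c) : B + single 0 0 c ∈ coneD := by
  have hterm (i j : Fin 4) : |B i j| • single 0 0 1 +
      B i j • symProd (Pi.single i 1) (Pi.single j 1) ∈ coneD := by
    obtain ⟨σ, hσ, hB⟩ : ∃ σ : ℝ, |σ| = 1 ∧ B i j = |B i j| * σ := by
      rcases abs_choice (B i j) with h | h
      · exact ⟨1, abs_one, by rw [h, mul_one]⟩
      · exact ⟨-1, by simp, by rw [h]; ring⟩
    nth_rw 2 [hB]
    rw [mul_smul, ← smul_add]
    exact smul_mem_coneD (single_zero_zero_add_smul_symProd_mem_coneD i j hσ) (abs_nonneg _)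
  have hsum : absSum B • single 0 0 1 + B ∈ coneD := by
    have h := sum_mem_coneD (s := Finset.univ) fun i _ =>
      sum_mem_coneD (s := Finset.univ) fun j _ => hterm i j
    simpa only [absSum, Finset.sum_add_distrib, sum_smul_symProd_single hB,
      ← Finset.sum_smul] using h
  convert add_mem_coneD hsum (single_zero_zero_mem_coneD (sub_nonneg.2 hc)) using 1
  rw [smul_single, smul_eq_mul, mul_one, add_right_comm, ← single_add, add_sub_cancel, add_comm]

lemma generic_single_zero_zero {c : ℝ} (hc : 0 < c) : Generic (single 0 0 c) := by
  have hopen : IsOpen {A : {A : Mat4 // Aᵀ = A} | absSum (A.val - single 0 0 c) < c} :=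
    isOpen_lt (continuous_absSum.comp (continuous_subtype_val.sub continuous_const))
      continuous_const
  refine ⟨transpose_single .., mem_interior.2
    ⟨_, fun A hA => ?_, hopen, by simpa [absSum] using hc⟩⟩
  have hsymm : (A.val - single 0 0 c)ᵀ = A.val - single 0 0 c := by
    rw [transpose_sub, A.2, transpose_single]
  simpa only [Set.mem_ofPred_eq, sub_add_cancel] using
    add_single_zero_zero_mem_coneD hsymm (le_of_lt hA)

/-! ### The dominant energy condition -/

lemma DEC.zero_zero_nonneg {T : Mat4} (hT : DEC T) : 0 ≤ T 0 0 := by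
  simpa [Pi.single_apply] using hT _ _ futureCausal_single_zero futureCausal_single_zero

lemma DEC.abs_apply_le {T : Mat4} (hT : DEC T) (i j : Fin 4) : |T i j| ≤ T 0 0 := by
  have hsign (σ : ℝ) (hσ : |σ| = 1) : 0 ≤ T 0 0 + σ * T i j := by
    have hplus := hT _ _ (futureCausal_single_zero_add_smul_single i abs_one)
      (futureCausal_single_zero_add_smul_single j hσ)
    have hminus := hT _ _ (futureCausal_single_zero_add_smul_single i (σ := -1) (by simp))
      (futureCausal_single_zero_add_smul_single j (σ := -σ) (by rwa [abs_neg]))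
    simp only [Pi.add_apply, Pi.smul_apply, Pi.single_apply, smul_eq_mul, mul_ite, ite_mul,
      mul_one, mul_zero, add_mul, mul_add, one_mul, zero_mul, Finset.sum_add_distrib,
      Finset.sum_ite_eq', Finset.mem_univ, if_true] at hplus hminus
    linarith
  exact abs_le.2 ⟨by linarith [hsign 1 abs_one], by linarith [hsign (-1) (by simp)]⟩

lemma DEC.smul {T : Mat4} (hT : DEC T) {c : ℝ} (hc : 0 ≤ c) : DEC (c • T) := by
  intro ξ ζ hξ hζ
  have h := mul_nonneg hc (hT ξ ζ hξ hζ)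
  simpa only [Finset.mul_sum, Matrix.smul_apply, smul_eq_mul, mul_left_comm, mul_assoc] using h

lemma DEC.abs_minner_le {T : Mat4} (hT : DEC T) (x : Mat4) :
    |minner T x| ≤ T 0 0 * absSum x := by
  simp only [minner, absSum, Finset.mul_sum]
  refine (Finset.abs_sum_le_sum_abs _ _).trans (Finset.sum_le_sum fun i _ => ?_)
  refine (Finset.abs_sum_le_sum_abs _ _).trans (Finset.sum_le_sum fun j _ => ?_)
  rw [abs_mul]
  exact mul_le_mul_of_nonneg_right (hT.abs_apply_le i j) (abs_nonneg _)

/-! ### Test functions -/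

section TestFunctions

variable {V : Type*} [NormedAddCommGroup V] [NormedSpace ℝ V] [FiniteDimensional ℝ V]

lemma exists_contDiff_eq_one_nhdsSet {K U : Set V} (hK : IsCompact K) (hU : IsOpen U)
    (hKU : K ⊆ U) :
    ∃ χ : V → ℝ, ContDiff ℝ ∞ χ ∧ HasCompactSupport χ ∧ tsupport χ ⊆ U ∧
      (∀ᶠ p in 𝓝ˢ K, χ p = 1) ∧ ∀ p, χ p ∈ Set.Icc 0 1 := by
  obtain ⟨L, hL, hKL, hLU⟩ := exists_compact_between hK hU hKU
  obtain ⟨χ, hone, hzero, hmem⟩ :=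
    exists_contMDiffMap_one_nhds_of_subset_interior (n := ⊤) 𝓘(ℝ, V) hK.isClosed hKL
  have hsupp : tsupport χ ⊆ L := closure_minimal
    (fun p hp => not_imp_comm.1 (hzero p) hp) hL.isClosed
  exact ⟨χ, χ.contMDiff.contDiff, HasCompactSupport.intro hL hzero, hsupp.trans hLU, hone, hmem⟩

lemma exists_contDiff_exhaustion_compl {Γ : Set V} (hΓ : IsClosed Γ) :
    ∃ φ : ℕ → V → ℝ, (∀ n, ContDiff ℝ ∞ (φ n)) ∧ (∀ n, HasCompactSupport (φ n)) ∧
      (∀ n p, 0 ≤ φ n p) ∧ (∀ n, ∀ p ∈ Γ, φ n =ᶠ[𝓝 p] 0) ∧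
      ∀ K, IsCompact K → Disjoint K Γ → ∀ᶠ n in atTop, ∀ p ∈ K, φ n p = 1 := by
  let L (n : ℕ) : Set V := Metric.closedBall 0 n \ Metric.thickening (1 / (n + 1)) Γ
  have hL (n : ℕ) : IsCompact (L n) :=
    (isCompact_closedBall 0 _).diff Metric.isOpen_thickening
  have hLΓ (n : ℕ) : L n ⊆ Γᶜ :=
    fun p hp hpΓ => hp.2 (Metric.self_subset_thickening (by positivity) Γ hpΓ)
  choose φ hsmooth hsupp hΓsupp hone hmem using
    fun n => exists_contDiff_eq_one_nhdsSet (hL n) hΓ.isOpen_compl (hLΓ n)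
  refine ⟨φ, hsmooth, hsupp, fun n p => (hmem n p).1, fun n p hp =>
    notMem_tsupport_iff_eventuallyEq.1 fun h => hΓsupp n h hp, fun K hK hKΓ => ?_⟩
  obtain ⟨δ, hδ, hdisj⟩ := hKΓ.exists_thickenings hK hΓ
  obtain ⟨R, hR⟩ := hK.isBounded.subset_closedBall 0
  filter_upwards [eventually_ge_atTop ⌈R⌉₊,
    (tendsto_one_div_add_atTop_nhds_zero_nat (𝕜 := ℝ)).eventually_le_const hδ] with n hnR hnδ p hp
  refine (hone n).self_of_nhdsSet p ⟨?_, fun hthick => ?_⟩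
  · exact Metric.closedBall_subset_closedBall (Nat.ceil_le.1 hnR) (hR hp)
  · exact Set.disjoint_left.1 hdisj (Metric.self_subset_thickening hδ K hp)
      (Metric.thickening_mono hnδ Γ hthick)

lemma exists_contDiff_integral_eq_one [MeasurableSpace V] [BorelSpace V] (μ : Measure V)
    [μ.IsAddHaarMeasure] (p : V) :
    ∃ g : V → ℝ, ContDiff ℝ ∞ g ∧ HasCompactSupport g ∧
      (∀ q, 0 ≤ g q) ∧ 0 < g p ∧ ∫ q, g q ∂μ = 1 := by
  let f : ContDiffBump p := ⟨1, 2, one_pos, one_lt_two⟩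
  refine ⟨f.normed μ, f.contDiff_normed, f.hasCompactSupport_normed, f.nonneg_normed, ?_,
    f.integral_normed⟩
  rw [f.normed_def]
  exact div_pos (f.pos_of_mem_ball (Metric.mem_ball_self f.rOut_pos)) f.integral_pos

end TestFunctions

section Primitives

variable {F : Type*} [NormedAddCommGroup F] [NormedSpace ℝ F] [CompleteSpace F]

lemma exists_hasCompactSupport_deriv_eq {g : ℝ → F} (hg : ContDiff ℝ ∞ g)
    (hgc : HasCompactSupport g) (hint : ∫ s, g s = 0) :
    ∃ G : ℝ → F, ContDiff ℝ ∞ G ∧ HasCompactSupport G ∧ deriv G = g := by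
  let G (s : ℝ) : F := ∫ t in Set.Iic s, g t
  have hgi : Integrable g := hg.continuous.integrable_of_hasCompactSupport hgc
  have hG : G = fun s => G 0 + ∫ t in 0..s, g t := funext fun s => by
    rw [← intervalIntegral.integral_Iic_sub_Iic hgi.integrableOn hgi.integrableOn,
      add_sub_cancel]
  have hderiv (s : ℝ) : HasDerivAt G (g s) s := by
    rw [hG]
    exact (hg.continuous.integral_hasStrictDerivAt 0 s).hasDerivAt.const_add _
  have hderiv_eq : deriv G = g := funext fun s => (hderiv s).deriv
  obtain ⟨a, b, hab⟩ := bddBelow_bddAbove_iff_subset_Icc.1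
    ⟨hgc.isCompact.bddBelow, hgc.isCompact.bddAbove⟩
  have hzero {s : ℝ} (hs : s ∉ Set.Icc a b) : g s = 0 :=
    image_eq_zero_of_notMem_tsupport fun h => hs (hab h)
  refine ⟨G, contDiff_infty_iff_deriv.2 ⟨fun s => (hderiv s).differentiableAt, hderiv_eq ▸ hg⟩,
    HasCompactSupport.intro (isCompact_Icc (a := a) (b := b)) fun s hs => ?_, hderiv_eq⟩
  rcases lt_or_ge s a with hsa | has
  · exact setIntegral_eq_zero_of_forall_eq_zero fun t ht =>
      hzero fun htab => (htab.1.trans ht).not_gt hsa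
  · rw [← hint]
    exact setIntegral_eq_integral_of_forall_compl_eq_zero fun t ht =>
      hzero fun htab => hs ⟨has, (not_le.1 ht).le.trans htab.2⟩

lemma exists_hasCompactSupport_deriv_eq_sub {f g : ℝ → ℝ} (hf : ContDiff ℝ ∞ f)
    (hfc : HasCompactSupport f) (hg : ContDiff ℝ ∞ g) (hgc : HasCompactSupport g)
    (hint : ∫ s, g s = 1) :
    ∃ G : ℝ → ℝ, ContDiff ℝ ∞ G ∧ HasCompactSupport G ∧
      deriv G = fun s => f s - (∫ t, f t) * g s := by
  have hfi : Integrable f := hf.continuous.integrable_of_hasCompactSupport hfc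
  have hgi : Integrable g := hg.continuous.integrable_of_hasCompactSupport hgc
  refine exists_hasCompactSupport_deriv_eq (hf.sub (contDiff_const.mul hg))
    (hfc.sub hgc.mul_left) ?_
  rw [integral_sub hfi (hgi.const_mul _), integral_const_mul, hint, mul_one, sub_self]

lemma exists_eq_const_of_integral_deriv_smul_eq_zero {f : ℝ → F} (hf : Continuous f)
    (h : ∀ G : ℝ → ℝ, ContDiff ℝ ∞ G → HasCompactSupport G → ∫ s, deriv G s • f s = 0) :
    ∃ c, f = fun _ => c := by
  obtain ⟨g, hg, hgc, -, -, hint⟩ := exists_contDiff_integral_eq_one volume (0 : ℝ)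
  have hfg {u : ℝ → ℝ} (hu : ContDiff ℝ ∞ u) (huc : HasCompactSupport u) :
      Integrable fun s => u s • f s :=
    (hu.continuous.smul hf).integrable_of_hasCompactSupport huc.smul_right
  refine ⟨∫ s, g s • f s, (hf.ae_eq_iff_eq volume continuous_const).1
    (ae_eq_of_integral_contDiff_smul_eq hf.locallyIntegrable
      continuous_const.locallyIntegrable fun u hu huc => ?_)⟩
  obtain ⟨G, hG, hGc, hderiv⟩ := exists_hasCompactSupport_deriv_eq_sub hu huc hg hgc hint
  have hzero := h G hG hGc
  simp only [hderiv, sub_smul, mul_smul] at hzero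
  rw [integral_sub (hfg hu huc) ((hfg hg hgc).fun_smul _), integral_smul, sub_eq_zero] at hzero
  rw [hzero, integral_smul_const]

end Primitives

lemma surjective_of_forall_le_deriv {f : ℝ → ℝ} (hf : Differentiable ℝ f) {c : ℝ} (hc : 0 < c)
    (h : ∀ t, c ≤ deriv f t) : Function.Surjective f := by
  have hgrowth {s t : ℝ} (hst : s ≤ t) : c * (t - s) ≤ f t - f s :=
    mul_sub_le_image_sub_of_le_deriv hf h hst
  refine hf.continuous.surjective ?_ ?_
  · refine tendsto_atTop_mono' atTop ?_
      (tendsto_atTop_add_const_left _ (f 0) (tendsto_id.const_mul_atTop hc))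
    filter_upwards [eventually_ge_atTop 0] with t ht
    simp only [id]
    linarith [hgrowth ht]
  · refine tendsto_atBot_mono' atBot ?_
      (tendsto_atBot_add_const_left _ (f 0) (tendsto_id.const_mul_atBot hc))
    filter_upwards [eventually_le_atBot 0] with t ht
    simp only [id]
    linarith [hgrowth ht]

/-! ### Matrix fields and their pairing -/

lemma SmoothMatField.continuous {x : Vec4 → Mat4} (hx : SmoothMatField x) : Continuous x :=
  continuous_matrix fun a b => (hx a b).continuous

/-- A continuous compactly supported function; the fields against which continuous fields are
paired. Smoothness is required separately, where it matters. -/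
structure IsTestFunction {X F : Type*} [TopologicalSpace X] [TopologicalSpace F] [Zero F]
    (x : X → F) : Prop where
  continuous : Continuous x
  hasCompactSupport : HasCompactSupport x

namespace IsTestFunction

variable {X F : Type*} [TopologicalSpace X] [TopologicalSpace F]

lemma sub [AddGroup F] [IsTopologicalAddGroup F] {x z : X → F} (hx : IsTestFunction x)
    (hz : IsTestFunction z) : IsTestFunction (x - z) :=
  ⟨hx.continuous.sub hz.continuous, hx.hasCompactSupport.sub hz.hasCompactSupport⟩

lemma add [AddMonoid F] [ContinuousAdd F] {x z : X → F} (hx : IsTestFunction x)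
    (hz : IsTestFunction z) : IsTestFunction (x + z) :=
  ⟨hx.continuous.add hz.continuous, hx.hasCompactSupport.add hz.hasCompactSupport⟩

lemma const_smul {R : Type*} [Zero F] [SMulZeroClass R F] [ContinuousConstSMul R F] {x : X → F}
    (hx : IsTestFunction x) (c : R) : IsTestFunction (c • x) :=
  ⟨hx.continuous.const_smul c, hx.hasCompactSupport.smul_left⟩

lemma comp_left {G : Type*} [TopologicalSpace G] [Zero F] [Zero G] {x : X → F}
    (hx : IsTestFunction x) {f : F → G} (hf : Continuous f) (hf0 : f 0 = 0) :
    IsTestFunction (f ∘ x) :=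
  ⟨hf.comp hx.continuous, hx.hasCompactSupport.comp_left hf0⟩

end IsTestFunction

/-- The gradient of a vector field, the matrix field with entries `∂ₐ Vᵇ`. -/
def vecGrad (V : Vec4 → Vec4) (p : Vec4) : Mat4 := of fun a b => pd a (fun q => V q b) p

lemma smoothMatField_vecGrad {V : Vec4 → Vec4} (hV : ContDiff ℝ ∞ V) :
    SmoothMatField (vecGrad V) := fun a b =>
  ((contDiff_pi.1 hV b).fderiv_right (by norm_cast)).clm_apply contDiff_const

lemma vecGrad_eventuallyEq {V W : Vec4 → Vec4} {p : Vec4} (h : V =ᶠ[𝓝 p] W) :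
    vecGrad V =ᶠ[𝓝 p] vecGrad W := by
  filter_upwards [h.eventuallyEq_nhds] with q hq
  ext a b
  have hb : (fun r => V r b) =ᶠ[𝓝 q] fun r => W r b := hq.fun_comp (· b)
  simp only [vecGrad, of_apply, pd, hb.fderiv_eq]

lemma isTestFunction_vecGrad {V : Vec4 → Vec4} (hV : ContDiff ℝ ∞ V)
    (hVc : HasCompactSupport V) : IsTestFunction (vecGrad V) := by
  refine ⟨(smoothMatField_vecGrad hV).continuous, HasCompactSupport.intro hVc fun p hp => ?_⟩
  rw [(vecGrad_eventuallyEq (notMem_tsupport_iff_eventuallyEq.1 hp)).eq_of_nhds]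
  ext a b
  simp [vecGrad, pd]

/-- The distributional pairing of a field with a test field. -/
def pairing (T x : Vec4 → Mat4) : ℝ := ∫ p, minner (T p) (x p)

lemma pairing_const_smul_left (c : ℝ) (T x : Vec4 → Mat4) :
    pairing (c • T) x = c * pairing T x := by
  simp only [pairing, ← integral_const_mul, minner, Pi.smul_apply, Matrix.smul_apply,
    smul_eq_mul, mul_assoc, Finset.mul_sum]

lemma pairing_const_smul_right (c : ℝ) (T x : Vec4 → Mat4) :
    pairing T (c • x) = c * pairing T x := by
  simp only [pairing, ← integral_const_mul, minner, Pi.smul_apply, Matrix.smul_apply,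
    smul_eq_mul, mul_left_comm _ c, Finset.mul_sum]

lemma pairing_transpose {T : Vec4 → Mat4} (hT : SymValued T) (x : Vec4 → Mat4) :
    pairing T (fun p => (x p)ᵀ) = pairing T x := by
  refine integral_congr_ae (.of_forall fun p => ?_)
  have hsymm (i j : Fin 4) : T p i j = T p j i := congrFun₂ (hT p) j i
  simp only [minner, transpose_apply]
  rw [Finset.sum_comm]
  simp only [hsymm]

section Linearity

variable {T x z : Vec4 → Mat4}

lemma integrable_minner (hT : Continuous T) (hx : IsTestFunction x) :
    Integrable fun p => minner (T p) (x p) := by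
  refine Continuous.integrable_of_hasCompactSupport ?_ (hx.hasCompactSupport.mono fun p hp h => ?_)
  · exact continuous_finsetSum _ fun i _ => continuous_finsetSum _ fun j _ =>
      (hT.matrix_elem i j).mul (hx.continuous.matrix_elem i j)
  · exact hp (by simp [minner, h])

lemma pairing_add (hT : Continuous T) (hx : IsTestFunction x) (hz : IsTestFunction z) :
    pairing T (x + z) = pairing T x + pairing T z := by
  rw [pairing, pairing, pairing,
    ← integral_add (integrable_minner hT hx) (integrable_minner hT hz)]
  simp only [minner, Pi.add_apply, Matrix.add_apply, mul_add, Finset.sum_add_distrib]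

lemma pairing_sub (hT : Continuous T) (hx : IsTestFunction x) (hz : IsTestFunction z) :
    pairing T (x - z) = pairing T x - pairing T z := by
  rw [pairing, pairing, pairing,
    ← integral_sub (integrable_minner hT hx) (integrable_minner hT hz)]
  simp only [minner, Pi.sub_apply, Matrix.sub_apply, mul_sub, Finset.sum_sub_distrib]

end Linearity

section IntegrationByParts

variable {f v : Vec4 → ℝ}

lemma continuous_pd (hf : ContDiff ℝ ∞ f) (a : Fin 4) : Continuous (pd a f) :=
  (hf.continuous_fderiv (by simp)).clm_apply continuous_const

lemma integrable_mul_of_hasCompactSupport (hf : Continuous f) (hv : Continuous v)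
    (hvc : HasCompactSupport v) : Integrable fun p => f p * v p :=
  (hf.mul hv).integrable_of_hasCompactSupport hvc.mul_left

lemma integral_mul_pd_eq_neg (hf : ContDiff ℝ ∞ f) (hv : ContDiff ℝ ∞ v)
    (hvc : HasCompactSupport v) (a : Fin 4) :
    ∫ p, f p * pd a v p = -∫ p, pd a f p * v p :=
  integral_mul_fderiv_eq_neg_fderiv_mul_of_integrable
    (integrable_mul_of_hasCompactSupport (continuous_pd hf a) hv.continuous hvc)
    (integrable_mul_of_hasCompactSupport hf.continuous (continuous_pd hv a) (hvc.fderiv_apply ℝ _))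
    (integrable_mul_of_hasCompactSupport hf.continuous hv.continuous hvc)
    (fun p _ => hf.differentiable (by simp) p) (fun p _ => hv.differentiable (by simp) p)

end IntegrationByParts

lemma DivFree.pairing_vecGrad {T : Vec4 → Mat4} (hdiv : DivFree T) (hT : SmoothMatField T)
    {V : Vec4 → Vec4} (hV : ContDiff ℝ ∞ V) (hVc : HasCompactSupport V) :
    pairing T (vecGrad V) = 0 := by
  have hVb (b : Fin 4) : ContDiff ℝ ∞ fun p => V p b := contDiff_pi.1 hV b
  have hVbc (b : Fin 4) : HasCompactSupport fun p => V p b :=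
    hVc.comp_left (g := fun v : Vec4 => v b) rfl
  have hgrad (a b : Fin 4) : Integrable fun p => T p a b * pd a (fun q => V q b) p :=
    integrable_mul_of_hasCompactSupport (hT a b).continuous (continuous_pd (hVb b) a)
      ((hVbc b).fderiv_apply ℝ _)
  have hdivV (a b : Fin 4) : Integrable fun p => pd a (fun q => T q a b) p * V p b :=
    integrable_mul_of_hasCompactSupport (continuous_pd (hT a b) a) (hVb b).continuous (hVbc b)
  calc pairing T (vecGrad V)
    _ = ∑ a, ∑ b, ∫ p, T p a b * pd a (fun q => V q b) p := by
      simp only [pairing, minner, vecGrad, of_apply]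
      rw [integral_finsetSum _ fun a _ => integrable_finsetSum _ fun b _ => hgrad a b]
      exact Finset.sum_congr rfl fun a _ => integral_finsetSum _ fun b _ => hgrad a b
    _ = -∑ b, ∫ p, ∑ a, pd a (fun q => T q a b) p * V p b := by
      rw [Finset.sum_comm, ← Finset.sum_neg_distrib]
      refine Finset.sum_congr rfl fun b _ => ?_
      rw [integral_finsetSum _ fun a _ => hdivV a b, ← Finset.sum_neg_distrib]
      exact Finset.sum_congr rfl fun a _ => integral_mul_pd_eq_neg (hT a b) (hVb b) (hVbc b) a
    _ = 0 := by
      simp only [← Finset.sum_mul, hdiv _ _, zero_mul, integral_zero, Finset.sum_const_zero,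
        neg_zero]

/-- The test field with energy component `q` and all other components zero. -/
def energyField (q : Vec4 → ℝ) (p : Vec4) : Mat4 := single 0 0 (q p)

section EnergyField

variable {q : Vec4 → ℝ}

lemma smoothMatField_energyField (hq : ContDiff ℝ ∞ q) : SmoothMatField (energyField q) := by
  intro a b
  simp only [energyField, single_apply]
  split_ifs
  exacts [hq, contDiff_const]

lemma isTestFunction_energyField (hq : IsTestFunction q) : IsTestFunction (energyField q) := by
  refine hq.comp_left (f := single 0 0) (continuous_matrix fun a b => ?_) (single_zero 0 0)
  simp only [single_apply]
  split_ifs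
  exacts [continuous_id, continuous_const]

lemma symValued_energyField (q : Vec4 → ℝ) : SymValued (energyField q) :=
  fun _ => transpose_single ..

lemma energyField_add (q r : Vec4 → ℝ) :
    energyField (q + r) = energyField q + energyField r :=
  funext fun p => single_add 0 0 (q p) (r p)

lemma energyField_sub (q r : Vec4 → ℝ) :
    energyField (q - r) = energyField q - energyField r :=
  funext fun p => (singleAddMonoidHom 0 0).map_sub (q p) (r p)

lemma energyField_const_smul (c : ℝ) (q : Vec4 → ℝ) :
    energyField (c • q) = c • energyField q :=
  funext fun p => (smul_single c 0 0 (q p)).symm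

lemma minner_energyField (T : Mat4) (q : Vec4 → ℝ) (p : Vec4) :
    minner T (energyField q p) = T 0 0 * q p := by
  simp [energyField, minner, Fin.sum_univ_four, single_apply]

end EnergyField

/-- A conserved stress-energy tensor satisfying the dominant energy condition. -/
structure IsMatterField (T : Vec4 → Mat4) : Prop where
  smooth : SmoothMatField T
  sym : SymValued T
  dec : ∀ p, DEC (T p)
  divFree : DivFree T

namespace IsMatterField

variable {T x : Vec4 → Mat4} {q : Vec4 → ℝ}

lemma const_smul (hT : IsMatterField T) {c : ℝ} (hc : 0 ≤ c) :
    IsMatterField (c • T) where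
  smooth a b := contDiff_const.mul (hT.smooth a b)
  sym p := by rw [Pi.smul_apply, transpose_smul, hT.sym]
  dec p := (hT.dec p).smul hc
  divFree p b := by
    have hpd (a : Fin 4) : pd a (fun q => (c • T) q a b) p = c * pd a (fun q => T q a b) p := by
      simp only [pd, Pi.smul_apply, Matrix.smul_apply, smul_eq_mul,
        fderiv_const_mul ((hT.smooth a b).differentiable (by simp) p)]
      rfl
    simp only [hpd, ← Finset.mul_sum, hT.divFree p b, mul_zero]

lemma pairing_energyField_nonneg (hT : IsMatterField T) (hq : ∀ p, 0 ≤ q p) :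
    0 ≤ pairing T (energyField q) := integral_nonneg fun p => by
  rw [minner_energyField]
  exact mul_nonneg (hT.dec p).zero_zero_nonneg (hq p)

lemma abs_pairing_le (hT : IsMatterField T) (hx : IsTestFunction x) (hq : IsTestFunction q)
    (hxq : ∀ p, absSum (x p) ≤ q p) : |pairing T x| ≤ pairing T (energyField q) := by
  have hTc := hT.smooth.continuous
  refine abs_integral_le_integral_abs.trans (integral_mono (integrable_minner hTc hx).abs
    (integrable_minner hTc (isTestFunction_energyField hq)) fun p => ?_)
  calc |minner (T p) (x p)|
    _ ≤ T p 0 0 * absSum (x p) := (hT.dec p).abs_minner_le _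
    _ ≤ T p 0 0 * q p := mul_le_mul_of_nonneg_left (hxq p) (hT.dec p).zero_zero_nonneg
    _ = minner (T p) (energyField q p) := (minner_energyField ..).symm

end IsMatterField

/-! ### Curves parametrized by time -/

/-- A smooth curve parametrized by its time coordinate. -/
structure IsTimeGraph (y : ℝ → Vec4) : Prop where
  smooth : ContDiff ℝ ∞ y
  time : ∀ s, y s 0 = s

/-- `q` is a test function on spacetime that agrees with the function `f` of time near the curve
`y`. -/
structure IsTimeExtension (y : ℝ → Vec4) (f : ℝ → ℝ) (q : Vec4 → ℝ) : Prop where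
  smooth : ContDiff ℝ ∞ q
  hasCompactSupport : HasCompactSupport q
  eventuallyEq : ∀ s, q =ᶠ[𝓝 (y s)] fun p => f (p 0)

lemma hasDerivAt_component {ι : Type*} {γ : ℝ → ι → ℝ} (hγ : Differentiable ℝ γ) (t : ℝ) (i : ι) :
    HasDerivAt (fun s => γ s i) (deriv γ t i) t :=
  hasDerivAt_pi.1 (hγ t).hasFDerivAt.hasDerivAt i

lemma pd_comp_time {g : ℝ → ℝ} {p : Vec4} (hg : DifferentiableAt ℝ g (p 0)) (a : Fin 4) :
    pd a (fun q => g (q 0)) p = (Pi.single 0 (deriv g (p 0)) : Vec4) a := by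
  have htime : HasFDerivAt (fun q : Vec4 => q 0) _ p :=
    (ContinuousLinearMap.proj (R := ℝ) (φ := fun _ : Fin 4 => ℝ) 0).hasFDerivAt
  have h := hg.hasDerivAt.comp_hasFDerivAt p htime
  rw [pd, show (fun q : Vec4 => g (q 0)) = g ∘ fun q => q 0 from rfl, h.fderiv]
  simp [Pi.single_apply, eq_comm]

namespace IsTimeGraph

variable {y : ℝ → Vec4}

lemma isClosed_range (hy : IsTimeGraph y) : IsClosed (Set.range y) := by
  have hrange : Set.range y = {p | y (p 0) = p} := by
    ext p
    refine ⟨?_, fun hp => ⟨p 0, hp⟩⟩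
    rintro ⟨s, rfl⟩
    exact congrArg y (hy.time s)
  rw [hrange]
  exact isClosed_eq (hy.smooth.continuous.comp (continuous_apply 0)) continuous_id

lemma differentiable (hy : IsTimeGraph y) : Differentiable ℝ y :=
  hy.smooth.differentiable (by simp)

lemma deriv_zero_eq_one (hy : IsTimeGraph y) (s : ℝ) : deriv y s 0 = 1 := by
  rw [← (hasDerivAt_component hy.differentiable s 0).deriv, funext hy.time]
  exact deriv_id s

lemma contDiff_deriv (hy : IsTimeGraph y) : ContDiff ℝ ∞ (deriv y) :=
  (contDiff_infty_iff_deriv.1 hy.smooth).2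

lemma hasCompactSupport_comp (hy : IsTimeGraph y) {q : Vec4 → ℝ} (hq : HasCompactSupport q) :
    HasCompactSupport fun s => q (y s) :=
  HasCompactSupport.of_support_subset_isCompact (hq.isCompact.image (continuous_apply 0))
    fun s hs => ⟨y s, subset_tsupport q hs, hy.time s⟩

lemma exists_isTimeExtension (hy : IsTimeGraph y) {f : ℝ → ℝ} (hf : ContDiff ℝ ∞ f)
    (hfc : HasCompactSupport f) : ∃ q, IsTimeExtension y f q := by
  obtain ⟨χ, hχ, hχc, -, hone, -⟩ := exists_contDiff_eq_one_nhdsSet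
    (hfc.isCompact.image hy.smooth.continuous) isOpen_univ (Set.subset_univ _)
  refine ⟨fun p => f (p 0) * χ p, (hf.comp (contDiff_apply ℝ ℝ 0)).mul hχ, hχc.mul_left,
    fun s => ?_⟩
  by_cases hs : s ∈ tsupport f
  · filter_upwards [eventually_nhdsSet_iff_forall.1 hone _ (Set.mem_image_of_mem y hs)] with p hp
    rw [hp, mul_one]
  · have htime : Tendsto (fun p : Vec4 => p 0) (𝓝 (y s)) (𝓝 s) := by
      simpa only [hy.time] using (continuous_apply (0 : Fin 4)).tendsto (y s)
    filter_upwards [htime.eventually (notMem_tsupport_iff_eventuallyEq.1 hs)] with p hp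
    rw [hp, Pi.zero_apply, zero_mul]

lemma contDiff_sub_comp_time (hy : IsTimeGraph y) (i : Fin 4) :
    ContDiff ℝ ∞ fun p : Vec4 => p i - y (p 0) i :=
  (contDiff_apply ℝ ℝ i).sub ((contDiff_pi.1 hy.smooth i).comp (contDiff_apply ℝ ℝ 0))

lemma pd_sub_comp_time (hy : IsTimeGraph y) (p : Vec4) (a i : Fin 4) :
    pd a (fun q => q i - y (q 0) i) p =
      (1 : Mat4) a i - (Pi.single 0 (deriv y (p 0) i) : Vec4) a := by
  have hyi : DifferentiableAt ℝ (fun s => y s i) (p 0) :=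
    (contDiff_pi.1 hy.smooth i).differentiable (by simp) _
  have hyt : DifferentiableAt ℝ (fun q : Vec4 => y (q 0) i) p :=
    hyi.comp (f := fun q : Vec4 => q 0) p (differentiableAt_apply _ _)
  rw [← (hasDerivAt_component hy.differentiable (p 0) i).deriv, ← pd_comp_time hyi a, pd, pd,
    fderiv_fun_sub (differentiableAt_apply _ _) hyt]
  simp [fderiv_apply, Pi.single_apply, Matrix.one_apply, eq_comm]

lemma pd_sub_comp_time_mul (hy : IsTimeGraph y) {f : Vec4 → ℝ} (hf : ContDiff ℝ ∞ f) (s : ℝ)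
    (a i : Fin 4) :
    pd a (fun p => (p i - y (p 0) i) * f p) (y s) =
      ((1 : Mat4) a i - (Pi.single 0 (deriv y s i) : Vec4) a) * f (y s) := by
  have h := hy.pd_sub_comp_time (y s) a i
  rw [hy.time] at h
  rw [← h, pd, fderiv_fun_mul ((hy.contDiff_sub_comp_time i).differentiable (by simp) _)
    (hf.differentiable (by simp) _)]
  simp [hy.time, pd, mul_comm]

end IsTimeGraph

namespace IsTimeExtension

variable {y : ℝ → Vec4} {f : ℝ → ℝ} {q : Vec4 → ℝ}

lemma apply_curve (hq : IsTimeExtension y f q) (hy : IsTimeGraph y) (s : ℝ) : q (y s) = f s := by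
  simpa only [hy.time] using (hq.eventuallyEq s).eq_of_nhds

lemma isTestFunction (hq : IsTimeExtension y f q) : IsTestFunction q :=
  ⟨hq.smooth.continuous, hq.hasCompactSupport⟩

lemma contDiff_smul_single (hq : IsTimeExtension y f q) (i : Fin 4) :
    ContDiff ℝ ∞ fun p => q p • (Pi.single i 1 : Vec4) :=
  hq.smooth.smul contDiff_const

lemma hasCompactSupport_smul_single (hq : IsTimeExtension y f q) (i : Fin 4) :
    HasCompactSupport fun p => q p • (Pi.single i 1 : Vec4) :=
  hq.hasCompactSupport.smul_right

lemma vecGrad_smul_single (hq : IsTimeExtension y f q) (hf : ContDiff ℝ ∞ f) (i : Fin 4) (s : ℝ) :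
    vecGrad (fun p => q p • Pi.single i 1) =ᶠ[𝓝 (y s)] fun p => single 0 i (deriv f (p 0)) := by
  have hloc : (fun p => q p • (Pi.single i 1 : Vec4)) =ᶠ[𝓝 (y s)]
      fun p => f (p 0) • (Pi.single i 1 : Vec4) := by
    filter_upwards [hq.eventuallyEq s] with p hp
    rw [hp]
  refine (vecGrad_eventuallyEq hloc).trans (.of_forall fun p => ?_)
  ext a b
  have h := pd_comp_time (hf.differentiable (by simp) (p 0)) a
  by_cases hb : b = i
  · subst hb
    simp [vecGrad, h, single_apply, Pi.single_apply, eq_comm]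
  · simp [vecGrad, pd, Pi.single_apply, hb, Ne.symm hb]

end IsTimeExtension

lemma IsTimeGraph.exists_isTimeExtension_forall_absSum_le {y : ℝ → Vec4} (hy : IsTimeGraph y)
    {x : Vec4 → Mat4} (hx : IsTestFunction x) (hxy : ∀ s, x (y s) = 0) :
    ∃ β h, ContDiff ℝ ∞ β ∧ HasCompactSupport β ∧ IsTimeExtension y β h ∧
      ∀ ε > 0, ∀ s, ∀ᶠ p in 𝓝 (y s), absSum (x p) ≤ ε * h p := by
  obtain ⟨β, hβ, hβc, -, hone, hmem⟩ := exists_contDiff_eq_one_nhdsSet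
    (hx.hasCompactSupport.isCompact.image (continuous_apply 0)) isOpen_univ (Set.subset_univ _)
  obtain ⟨h, hh⟩ := hy.exists_isTimeExtension hβ hβc
  refine ⟨β, h, hβ, hβc, hh, fun ε hε s => ?_⟩
  by_cases hs : y s ∈ tsupport x
  · have hβs : β s = 1 := hone.self_of_nhdsSet s ⟨y s, hs, hy.time s⟩
    have hlt : absSum (x (y s)) < ε * h (y s) := by
      rwa [hxy, absSum_zero, hh.apply_curve hy, hβs, mul_one]
    exact (((continuous_absSum.comp hx.continuous).continuousAt.eventually_lt
      (continuous_const.mul hh.smooth.continuous).continuousAt hlt)).mono fun _ => le_of_lt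
  · filter_upwards [notMem_tsupport_iff_eventuallyEq.1 hs, hh.eventuallyEq s] with p hxp hhp
    rw [hxp, hhp, Pi.zero_apply, absSum_zero]
    exact mul_nonneg hε.le (hmem _).1

/-! ### Fields concentrating on a curve -/

/-- A sequence of matter fields that charges only the curve `y` in the limit, with energies
normalized by testing against an extension of a function of time of integral one. -/
structure Concentrates (y : ℝ → Vec4) (S : ℕ → Vec4 → Mat4) : Prop where
  matter : ∀ n, IsMatterField (S n)
  normalized : ∃ g q, ContDiff ℝ ∞ g ∧ HasCompactSupport g ∧ ∫ s, g s = 1 ∧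
    IsTimeExtension y g q ∧ ∀ n, pairing (S n) (energyField q) = 1
  negligible : ∀ x, IsTestFunction x → (∀ s, x =ᶠ[𝓝 (y s)] 0) →
    Tendsto (fun n => pairing (S n) x) atTop (𝓝 0)

/-- The matrix field obtained from `x` by contracting its first index with the velocity `deriv y`
and moving the result to the row of the energy. -/
def contractVelocity (y : ℝ → Vec4) (x : Vec4 → Mat4) (p : Vec4) : Mat4 :=
  vecMulVec (Pi.single 0 1) (deriv y (p 0) ᵥ* x p)

section ContractVelocity

variable {y : ℝ → Vec4} {x : Vec4 → Mat4}

lemma smoothMatField_contractVelocity (hy : IsTimeGraph y) (hx : SmoothMatField x) :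
    SmoothMatField (contractVelocity y x) := by
  intro a b
  simp only [contractVelocity, vecMulVec_apply, vecMul, dotProduct]
  refine contDiff_const.mul (ContDiff.sum fun i _ => ContDiff.mul ?_ (hx i b))
  exact (contDiff_pi.1 hy.contDiff_deriv i).comp (contDiff_apply ℝ ℝ 0)

lemma isTestFunction_contractVelocity (hy : IsTimeGraph y) (hx : IsTestFunction x) :
    IsTestFunction (contractVelocity y x) where
  continuous := continuous_const.matrix_vecMulVec
    ((hy.contDiff_deriv.continuous.comp (continuous_apply 0)).matrix_vecMul hx.continuous)
  hasCompactSupport := hx.hasCompactSupport.mono fun p hp h =>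
    hp (by simp only [contractVelocity, h, vecMul_zero, vecMulVec_zero])

lemma contractVelocity_transpose_contractVelocity (y : ℝ → Vec4) (x : Vec4 → Mat4) :
    contractVelocity y (fun p => (contractVelocity y x p)ᵀ) =
      energyField fun p => deriv y (p 0) ᵥ* x p ⬝ᵥ deriv y (p 0) := by
  funext p
  simp only [contractVelocity, transpose_vecMulVec, vecMul_vecMulVec, energyField]
  rw [vecMulVec_smul, ← single_eq_single_vecMulVec_single, smul_single, smul_eq_mul, mul_one,
    dotProduct_comm]

-- The potential `V = (p - y(p⁰)) x(p)` vanishes on the curve, so there only the derivatives of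
-- its first factor contribute to `∇V`.
lemma exists_vecGrad_eq_sub_contractVelocity (hy : IsTimeGraph y) (hx : SmoothMatField x)
    (hxc : HasCompactSupport x) :
    ∃ V : Vec4 → Vec4, ContDiff ℝ ∞ V ∧ HasCompactSupport V ∧
      ∀ s, vecGrad V (y s) = x (y s) - contractVelocity y x (y s) := by
  have hcomponent (b : Fin 4) : (fun p => ((p - y (p 0)) ᵥ* x p) b) =
      fun p => ∑ i, (p i - y (p 0) i) * x p i b := rfl
  have hsmooth (i b : Fin 4) : ContDiff ℝ ∞ fun p => (p i - y (p 0) i) * x p i b :=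
    (hy.contDiff_sub_comp_time i).mul (hx i b)
  refine ⟨fun p => (p - y (p 0)) ᵥ* x p, contDiff_pi.2 fun b => ?_,
    hxc.mono fun p hp h => hp (by simp only [h, vecMul_zero]), fun s => ?_⟩
  · rw [hcomponent]
    exact ContDiff.sum fun i _ => hsmooth i b
  · ext a b
    calc vecGrad (fun p => (p - y (p 0)) ᵥ* x p) (y s) a b
      _ = ∑ i, pd a (fun p => (p i - y (p 0) i) * x p i b) (y s) := by
        rw [vecGrad, of_apply, hcomponent, pd,
          fderiv_fun_sum fun i _ => (hsmooth i b).differentiable (by simp) _, _root_.sum_apply]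
        rfl
      _ = ((1 : Mat4) * x (y s)) a b -
          ∑ i, (Pi.single 0 (deriv y s i) : Vec4) a * x (y s) i b := by
        rw [mul_apply, ← Finset.sum_sub_distrib]
        exact Finset.sum_congr rfl fun i _ =>
          (hy.pd_sub_comp_time_mul (hx i b) s a i).trans (sub_mul ..)
      _ = (x (y s) - contractVelocity y x (y s)) a b := by
        simp [contractVelocity, hy.time, vecMulVec_apply, vecMul, dotProduct, Pi.single_apply]

end ContractVelocity

namespace Concentrates

variable {y : ℝ → Vec4} {S : ℕ → Vec4 → Mat4}

-- If `G' = f - (∫ f) g`, then `energyField (q - (∫ f) r)` agrees near the curve with the gradient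
-- of an extension of `G` times `e₀`.
lemma tendsto_pairing_isTimeExtension (hS : Concentrates y S) (hy : IsTimeGraph y) {f : ℝ → ℝ}
    {q : Vec4 → ℝ} (hf : ContDiff ℝ ∞ f) (hfc : HasCompactSupport f)
    (hq : IsTimeExtension y f q) :
    Tendsto (fun n => pairing (S n) (energyField q)) atTop (𝓝 (∫ s, f s)) := by
  obtain ⟨g, r, hg, hgc, hint, hr, hnorm⟩ := hS.normalized
  obtain ⟨G, hG, hGc, hderiv⟩ := exists_hasCompactSupport_deriv_eq_sub hf hfc hg hgc hint
  obtain ⟨u, hu⟩ := hy.exists_isTimeExtension hG hGc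
  set c := ∫ s, f s
  have hU := hu.contDiff_smul_single 0
  have hUc := hu.hasCompactSupport_smul_single 0
  have hqT := isTestFunction_energyField hq.isTestFunction
  have hrT := (isTestFunction_energyField hr.isTestFunction).const_smul c
  have hUT := isTestFunction_vecGrad hU hUc
  have hvanish (s : ℝ) : energyField q - c • energyField r -
      vecGrad (fun p => u p • Pi.single 0 1) =ᶠ[𝓝 (y s)] 0 := by
    filter_upwards [hq.eventuallyEq s, hr.eventuallyEq s, hu.vecGrad_smul_single hG 0 s]
      with p hqp hrp hup
    rw [← energyField_const_smul, ← energyField_sub, Pi.sub_apply, hup, hderiv, energyField,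
      Pi.sub_apply, Pi.smul_apply, smul_eq_mul, hqp, hrp, sub_self, Pi.zero_apply]
  have hlim := (hS.negligible _ ((hqT.sub hrT).sub hUT) hvanish).add_const c
  rw [zero_add] at hlim
  refine hlim.congr fun n => ?_
  have hSc := (hS.matter n).smooth.continuous
  rw [pairing_sub hSc (hqT.sub hrT) hUT, pairing_sub hSc hqT hrT, pairing_const_smul_right, hnorm,
    (hS.matter n).divFree.pairing_vecGrad (hS.matter n).smooth hU hUc, mul_one, sub_zero,
    sub_add_cancel]

lemma tendsto_pairing_zero (hS : Concentrates y S) (hy : IsTimeGraph y) {x : Vec4 → Mat4}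
    (hx : IsTestFunction x) (hxy : ∀ s, x (y s) = 0) :
    Tendsto (fun n => pairing (S n) x) atTop (𝓝 0) := by
  obtain ⟨β, h, hβ, hβc, hh, hle⟩ := hy.exists_isTimeExtension_forall_absSum_le hx hxy
  refine Metric.tendsto_nhds.2 fun δ hδ => ?_
  obtain ⟨ε, hε, hεδ⟩ := exists_pos_mul_lt hδ (∫ s, β s)
  have hmajorant : IsTestFunction (ε • h) := hh.isTestFunction.const_smul ε
  let r : Vec4 → ℝ := (max · 0) ∘ (absSum ∘ x - ε • h)
  have hr : IsTestFunction r := ((hx.comp_left continuous_absSum absSum_zero).sub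
    hmajorant).comp_left (continuous_id.max continuous_const) (max_self 0)
  have hr_near (s : ℝ) : energyField r =ᶠ[𝓝 (y s)] 0 := by
    filter_upwards [hle ε hε s] with p hp
    have hrp : r p = 0 := max_eq_right (sub_nonpos.2 hp)
    rw [energyField, hrp, single_zero, Pi.zero_apply]
  have hrT := isTestFunction_energyField hr
  have hhT := isTestFunction_energyField hmajorant
  have hlim := ((hS.tendsto_pairing_isTimeExtension hy hβ hβc hh).const_mul ε).add
    (hS.negligible _ hrT hr_near)
  rw [add_zero, mul_comm] at hlim
  filter_upwards [hlim.eventually_lt_const hεδ] with n hn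
  rw [Real.dist_eq, sub_zero]
  calc |pairing (S n) x|
    _ ≤ pairing (S n) (energyField (ε • h + r)) :=
      (hS.matter n).abs_pairing_le hx (hmajorant.add hr) fun p =>
        sub_le_iff_le_add'.1 (le_max_left _ _)
    _ = ε * pairing (S n) (energyField h) + pairing (S n) (energyField r) := by
      rw [energyField_add, pairing_add (hS.matter n).smooth.continuous hhT hrT,
        energyField_const_smul, pairing_const_smul_right]
    _ < δ := hn

lemma tendsto_pairing_energyField (hS : Concentrates y S) (hy : IsTimeGraph y) {w : Vec4 → ℝ}
    (hw : ContDiff ℝ ∞ w) (hwc : HasCompactSupport w) :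
    Tendsto (fun n => pairing (S n) (energyField w)) atTop (𝓝 (∫ s, w (y s))) := by
  have hf : ContDiff ℝ ∞ fun s => w (y s) := hw.comp hy.smooth
  have hfc : HasCompactSupport fun s => w (y s) := hy.hasCompactSupport_comp hwc
  obtain ⟨q, hq⟩ := hy.exists_isTimeExtension hf hfc
  have hwT := isTestFunction_energyField ⟨hw.continuous, hwc⟩
  have hqT := isTestFunction_energyField hq.isTestFunction
  have hlim := (hS.tendsto_pairing_zero hy (hwT.sub hqT) fun s => by
    rw [Pi.sub_apply, energyField, energyField, hq.apply_curve hy, sub_self]).add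
      (hS.tendsto_pairing_isTimeExtension hy hf hfc hq)
  rw [zero_add] at hlim
  exact hlim.congr fun n => by
    rw [pairing_sub (hS.matter n).smooth.continuous hwT hqT, sub_add_cancel]

lemma tendsto_pairing_sub_contractVelocity (hS : Concentrates y S) (hy : IsTimeGraph y)
    {x : Vec4 → Mat4} (hx : SmoothMatField x) (hxc : HasCompactSupport x) :
    Tendsto (fun n => pairing (S n) x - pairing (S n) (contractVelocity y x)) atTop (𝓝 0) := by
  obtain ⟨V, hV, hVc, hgrad⟩ := exists_vecGrad_eq_sub_contractVelocity hy hx hxc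
  have hxT : IsTestFunction x := ⟨hx.continuous, hxc⟩
  have hcT := isTestFunction_contractVelocity hy hxT
  have hVT := isTestFunction_vecGrad hV hVc
  refine (hS.tendsto_pairing_zero hy ((hxT.sub hcT).sub hVT) fun s => ?_).congr fun n => ?_
  · simp only [Pi.sub_apply, hgrad, sub_self]
  · have hSc := (hS.matter n).smooth.continuous
    rw [pairing_sub hSc (hxT.sub hcT) hVT, pairing_sub hSc hxT hcT,
      (hS.matter n).divFree.pairing_vecGrad (hS.matter n).smooth hV hVc, sub_zero]

-- Contracting both indices with the velocity leaves an energy field.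
theorem tendsto_pairing (hS : Concentrates y S) (hy : IsTimeGraph y) {x : Vec4 → Mat4}
    (hx : SmoothMatField x) (hxc : HasCompactSupport x) :
    Tendsto (fun n => pairing (S n) x) atTop
      (𝓝 (∫ s, ∑ i, ∑ j, deriv y s i * deriv y s j * x (y s) i j)) := by
  let z (p : Vec4) : Mat4 := (contractVelocity y x p)ᵀ
  let w (p : Vec4) : ℝ := deriv y (p 0) ᵥ* x p ⬝ᵥ deriv y (p 0)
  have hz : SmoothMatField z := fun a b => smoothMatField_contractVelocity hy hx b a
  have hzc : HasCompactSupport z :=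
    (isTestFunction_contractVelocity hy ⟨hx.continuous, hxc⟩).hasCompactSupport.comp_left
      (g := transpose) transpose_zero
  have hderiv (i : Fin 4) : ContDiff ℝ ∞ fun p : Vec4 => deriv y (p 0) i :=
    (contDiff_pi.1 hy.contDiff_deriv i).comp (contDiff_apply ℝ ℝ 0)
  have hw : ContDiff ℝ ∞ w := by
    simp only [w, vecMul, dotProduct]
    exact ContDiff.sum fun j _ =>
      (ContDiff.sum fun i _ => (hderiv i).mul (hx i j)).mul (hderiv j)
  have hwc : HasCompactSupport w := hxc.mono fun p hp h =>
    hp (by simp only [w, h, vecMul_zero, zero_dotProduct])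
  have hlim := ((hS.tendsto_pairing_sub_contractVelocity hy hx hxc).add
    (hS.tendsto_pairing_sub_contractVelocity hy hz hzc)).add
      (hS.tendsto_pairing_energyField hy hw hwc)
  have hw_curve (s : ℝ) : w (y s) = ∑ i, ∑ j, deriv y s i * deriv y s j * x (y s) i j := by
    simp only [w, hy.time, vecMul, dotProduct, Finset.sum_mul]
    rw [Finset.sum_comm]
    simp only [mul_right_comm]
  simp only [zero_add, hw_curve] at hlim
  refine hlim.congr fun n => ?_
  rw [contractVelocity_transpose_contractVelocity, pairing_transpose (hS.matter n).sym]
  ring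

lemma integral_deriv_mul_deriv_apply_eq_zero (hS : Concentrates y S) (hy : IsTimeGraph y)
    {G : ℝ → ℝ} (hG : ContDiff ℝ ∞ G) (hGc : HasCompactSupport G) (i : Fin 4) :
    ∫ s, deriv G s * deriv y s i = 0 := by
  obtain ⟨q, hq⟩ := hy.exists_isTimeExtension hG hGc
  have hV := hq.contDiff_smul_single i
  have hVc := hq.hasCompactSupport_smul_single i
  have hlim := hS.tendsto_pairing hy (smoothMatField_vecGrad hV)
    (isTestFunction_vecGrad hV hVc).hasCompactSupport
  have hcurve (s : ℝ) : ∑ a, ∑ b, deriv y s a * deriv y s b *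
      vecGrad (fun p => q p • Pi.single i 1) (y s) a b = deriv G s * deriv y s i := by
    rw [(hq.vecGrad_smul_single hG i s).eq_of_nhds, hy.time, Finset.sum_eq_single 0,
      Finset.sum_eq_single i]
    all_goals simp +contextual [single_apply, hy.deriv_zero_eq_one, mul_comm, eq_comm]
  simp only [(hS.matter _).divFree.pairing_vecGrad (hS.matter _).smooth hV hVc, hcurve] at hlim
  exact tendsto_nhds_unique hlim tendsto_const_nhds

theorem exists_deriv_eq_const (hS : Concentrates y S) (hy : IsTimeGraph y) :
    ∃ v, deriv y = fun _ => v := by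
  have hconst (i : Fin 4) : ∃ c, (fun s => deriv y s i) = fun _ => c :=
    exists_eq_const_of_integral_deriv_smul_eq_zero
      (contDiff_pi.1 hy.contDiff_deriv i).continuous
      fun _ hG hGc => hS.integral_deriv_mul_deriv_apply_eq_zero hy hG hGc i
  choose v hv using hconst
  exact ⟨v, funext fun s => funext fun i => congrFun (hv i) s⟩

end Concentrates

/-! ### Tracking collections -/

lemma tendsto_pairing_zero_of_nat_mul_pairing_le {S : ℕ → Vec4 → Mat4}
    (hS : ∀ n, IsMatterField (S n)) {φ : ℕ → Vec4 → ℝ} (hφ : ∀ n, IsTestFunction (φ n))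
    (hφ_nonneg : ∀ n p, 0 ≤ φ n p) {B : ℝ} (hB : ∀ n, n * pairing (S n) (energyField (φ n)) ≤ B)
    {x : Vec4 → Mat4} (hx : IsTestFunction x) (hone : ∀ᶠ n in atTop, ∀ p ∈ tsupport x, φ n p = 1) :
    Tendsto (fun n => pairing (S n) x) atTop (𝓝 0) := by
  have ha := hx.comp_left continuous_absSum absSum_zero
  obtain ⟨M, hM⟩ := ha.hasCompactSupport.exists_bound_of_continuous ha.continuous
  have hM_nonneg : 0 ≤ M := (norm_nonneg _).trans (hM 0)
  refine squeeze_zero_norm' ?_ (tendsto_const_div_atTop_nhds_zero_nat (M * B))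
  filter_upwards [hone, eventually_gt_atTop 0] with n hn hn_pos
  have hxφ (p : Vec4) : absSum (x p) ≤ (M • φ n) p := by
    by_cases hp : p ∈ tsupport x
    · rw [Pi.smul_apply, hn p hp, smul_eq_mul, mul_one]
      exact (le_abs_self _).trans (hM p)
    · rw [image_eq_zero_of_notMem_tsupport hp, absSum_zero]
      exact mul_nonneg hM_nonneg (hφ_nonneg n p)
  rw [Real.norm_eq_abs, le_div_iff₀ (Nat.cast_pos.2 hn_pos)]
  calc |pairing (S n) x| * n
    _ ≤ pairing (S n) (energyField (M • φ n)) * n := mul_le_mul_of_nonneg_right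
      ((hS n).abs_pairing_le hx ((hφ n).const_smul M) hxφ) n.cast_nonneg
    _ = M * (n * pairing (S n) (energyField (φ n))) := by
      rw [energyField_const_smul, pairing_const_smul_right]
      ring
    _ ≤ M * B := mul_le_mul_of_nonneg_left (hB n) hM_nonneg

namespace Tracks

variable {C : Set (Vec4 → Mat4)} {γ : ℝ → Vec4}

lemma exists_pairing_energyField_pos (htr : Tracks C γ) {q : Vec4 → ℝ} (hq : ContDiff ℝ ∞ q)
    (hqc : HasCompactSupport q) (hnonneg : ∀ p ∈ Set.range γ, ∀ᶠ p' in 𝓝 p, 0 ≤ q p')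
    (hpos : ∃ p ∈ Set.range γ, 0 < q p) : ∃ T ∈ C, 0 < pairing T (energyField q) := by
  obtain ⟨_, ⟨t, rfl⟩, ht⟩ := hpos
  exact htr (energyField q) (smoothMatField_energyField hq)
    (isTestFunction_energyField ⟨hq.continuous, hqc⟩).hasCompactSupport (symValued_energyField q)
    ⟨interior {p | 0 ≤ q p}, isOpen_interior,
      fun p hp => mem_interior_iff_mem_nhds.2 (hnonneg p hp),
      fun _ hp => single_zero_zero_mem_coneD (interior_subset (s := {p | 0 ≤ q p}) hp)⟩
    ⟨t, generic_single_zero_zero ht⟩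

lemma exists_mul_pairing_energyField_lt (htr : Tracks C γ) (hC : ∀ T ∈ C, Continuous T)
    {q φ : Vec4 → ℝ} (hq : ContDiff ℝ ∞ q) (hqc : HasCompactSupport q)
    (hφ : ContDiff ℝ ∞ φ) (hφc : HasCompactSupport φ)
    (hnonneg : ∀ p ∈ Set.range γ, ∀ᶠ p' in 𝓝 p, 0 ≤ q p')
    (hpos : ∃ p ∈ Set.range γ, 0 < q p) (hφγ : ∀ p ∈ Set.range γ, φ =ᶠ[𝓝 p] 0) (c : ℝ) :
    ∃ T ∈ C, c * pairing T (energyField φ) < pairing T (energyField q) := by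
  have hnear (p : Vec4) (hp : p ∈ Set.range γ) : q - c • φ =ᶠ[𝓝 p] q := by
    filter_upwards [hφγ p hp] with p' hp'
    rw [Pi.sub_apply, Pi.smul_apply, hp', Pi.zero_apply, smul_zero, sub_zero]
  obtain ⟨p, hp, hqp⟩ := hpos
  obtain ⟨T, hT, hT_pos⟩ := htr.exists_pairing_energyField_pos (q := q - c • φ)
    (hq.sub (hφ.const_smul c)) (hqc.sub hφc.smul_left)
    (fun p hp => ((hnonneg p hp).and (hnear p hp)).mono fun _ h => h.1.trans_eq h.2.symm)
    ⟨p, hp, hqp.trans_eq (hnear p hp).eq_of_nhds.symm⟩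
  refine ⟨T, hT, ?_⟩
  rwa [energyField_sub, energyField_const_smul,
    pairing_sub (hC T hT) (isTestFunction_energyField ⟨hq.continuous, hqc⟩)
      ((isTestFunction_energyField ⟨hφ.continuous, hφc⟩).const_smul c),
    pairing_const_smul_right, sub_pos] at hT_pos

-- Testing against `q - n φₙ`, with `q` of unit integral along the curve and `φₙ` exhausting its
-- complement, yields fields whose energy away from the curve is relatively `O(1 / n)`.
theorem exists_concentrates (htr : Tracks C γ) (hC : ∀ T ∈ C, IsMatterField T) {y : ℝ → Vec4}
    (hy : IsTimeGraph y) (hγy : Set.range γ = Set.range y) :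
    ∃ (c : ℕ → ℝ) (T : ℕ → Vec4 → Mat4), (∀ n, 0 < c n) ∧ (∀ n, T n ∈ C) ∧
      Concentrates y fun n => c n • T n := by
  obtain ⟨g, hg, hgc, hg_nonneg, hg0, hint⟩ := exists_contDiff_integral_eq_one volume (0 : ℝ)
  obtain ⟨q, hq⟩ := hy.exists_isTimeExtension hg hgc
  obtain ⟨φ, hφ, hφc, hφ_nonneg, hφ_curve, hφ_one⟩ :=
    exists_contDiff_exhaustion_compl hy.isClosed_range
  have hmem (n : ℕ) : ∃ T ∈ C, n * pairing T (energyField (φ n)) < pairing T (energyField q) := by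
    refine htr.exists_mul_pairing_energyField_lt (fun T hT => (hC T hT).smooth.continuous)
      hq.smooth hq.hasCompactSupport (hφ n) (hφc n) ?_ ?_ (hγy ▸ hφ_curve n) n
    · rw [hγy, Set.forall_mem_range]
      exact fun s => (hq.eventuallyEq s).mono fun p hp => (hg_nonneg _).trans_eq hp.symm
    · rw [hγy, Set.exists_range_iff]
      exact ⟨0, by rwa [hq.apply_curve hy]⟩
  choose T hT hlt using hmem
  have hpos (n : ℕ) : 0 < pairing (T n) (energyField q) :=
    (mul_nonneg n.cast_nonneg
      ((hC _ (hT n)).pairing_energyField_nonneg (hφ_nonneg n))).trans_lt (hlt n)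
  let c (n : ℕ) : ℝ := (pairing (T n) (energyField q))⁻¹
  have hc (n : ℕ) : 0 < c n := inv_pos.2 (hpos n)
  have hmatter (n : ℕ) : IsMatterField (c n • T n) := (hC _ (hT n)).const_smul (hc n).le
  refine ⟨c, T, hc, hT, hmatter, ⟨g, q, hg, hgc, hint, hq, fun n => ?_⟩, fun x hx hx_curve => ?_⟩
  · rw [pairing_const_smul_left, inv_mul_cancel₀ (hpos n).ne']
  · refine tendsto_pairing_zero_of_nat_mul_pairing_le hmatter
      (fun n => ⟨(hφ n).continuous, hφc n⟩) hφ_nonneg (B := 1) (fun n => ?_) hx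
      (hφ_one _ hx.hasCompactSupport.isCompact ?_)
    · rw [pairing_const_smul_left, mul_left_comm, inv_mul_le_iff₀ (hpos n), mul_one]
      exact (hlt n).le
    · rw [Set.disjoint_right, Set.forall_mem_range]
      exact fun s => notMem_tsupport_iff_eventuallyEq.2 (hx_curve s)

end Tracks

/-! ### Reparametrization by time -/

lemma integral_deriv_smul_comp_of_surjective {F : Type*} [NormedAddCommGroup F] [NormedSpace ℝ F]
    {τ : ℝ → ℝ} (hpos : ∀ t, 0 < deriv τ t) (hsurj : Function.Surjective τ) (f : ℝ → F) :
    ∫ t, deriv τ t • f (τ t) = ∫ s, f s := by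
  have h := integral_image_eq_integral_abs_deriv_smul MeasurableSet.univ
    (fun t _ => (differentiableAt_of_deriv_ne_zero (hpos t).ne').hasDerivAt.hasDerivWithinAt)
    (strictMono_of_deriv_pos hpos).injective.injOn f
  simpa only [Set.image_univ, hsurj.range_eq, setIntegral_univ, abs_of_pos (hpos _)] using h.symm

section Reparametrization

variable {γ : ℝ → Vec4}

lemma exists_isTimeGraph (hγ : ContDiff ℝ ∞ γ) (hpos : ∀ t, 0 < deriv γ t 0)
    (hsurj : Function.Surjective fun t => γ t 0) :
    ∃ y, IsTimeGraph y ∧ ∀ t, γ t = y (γ t 0) := by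
  have hderiv (t : ℝ) : HasDerivAt (fun s => γ s 0) (deriv γ t 0) t :=
    hasDerivAt_component (hγ.differentiable (by simp)) t 0
  have hmono : StrictMono fun t => γ t 0 :=
    strictMono_of_deriv_pos fun t => (hderiv t).deriv.symm ▸ hpos t
  let e := (hmono.orderIsoOfSurjective _ hsurj).toHomeomorph
  have he : ContDiff ℝ ∞ e.symm :=
    e.contDiff_symm_deriv (fun t => (hpos t).ne') hderiv (contDiff_pi.1 hγ 0)
  exact ⟨γ ∘ e.symm, ⟨hγ.comp he, e.apply_symm_apply⟩,
    fun t => congrArg γ (e.symm_apply_apply t).symm⟩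

lemma deriv_eq_smul_of_eq_comp_time {y : ℝ → Vec4} (hγ : Differentiable ℝ γ) (hy : IsTimeGraph y)
    (hγy : ∀ t, γ t = y (γ t 0)) (t : ℝ) :
    deriv γ t = deriv γ t 0 • deriv y (γ t 0) := by
  have htime : HasDerivAt (fun s => γ s 0) (deriv γ t 0) t :=
    hasDerivAt_component hγ t 0
  have h := (hy.differentiable (γ t 0)).hasDerivAt.scomp t htime
  rw [← h.deriv]
  exact congrArg (deriv · t) (funext hγy)

lemma integral_velocity_eq_const_mul {y : ℝ → Vec4} (hγ : Differentiable ℝ γ) (hy : IsTimeGraph y)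
    (hγy : ∀ t, γ t = y (γ t 0)) (hsurj : Function.Surjective fun t => γ t 0) {k : ℝ} (hk : 0 < k)
    (hderiv : ∀ t, deriv γ t 0 = k) (x : Vec4 → Mat4) :
    ∫ t, ∑ i, ∑ j, deriv γ t i * deriv γ t j * x (γ t) i j =
      k * ∫ s, ∑ i, ∑ j, deriv y s i * deriv y s j * x (y s) i j := by
  have htime (t : ℝ) : deriv (fun s => γ s 0) t = k :=
    (hasDerivAt_component hγ t 0).deriv.trans (hderiv t)
  rw [← integral_const_mul]
  refine (integral_congr_ae (.of_forall fun t => ?_)).trans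
    (integral_deriv_smul_comp_of_surjective (fun t => htime t ▸ hk) hsurj _)
  have hvelocity (i : Fin 4) : deriv γ t i = k * deriv y (γ t 0) i := by
    rw [deriv_eq_smul_of_eq_comp_time hγ hy hγy, hderiv, Pi.smul_apply, smul_eq_mul]
  simp only [htime, hvelocity, ← hγy, smul_eq_mul, Finset.mul_sum]
  exact Finset.sum_congr rfl fun i _ => Finset.sum_congr rfl fun j _ => by ring

end Reparametrization

lemma one_le_of_mink_self_eq_one {v : Vec4} (hv : mink v v = 1) (hv0 : 0 < v 0) : 1 ≤ v 0 := by
  rw [mink] at hv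
  nlinarith [sq_nonneg (v 1), sq_nonneg (v 2), sq_nonneg (v 3)]

lemma surjective_time_of_mink_self_eq_one {γ : ℝ → Vec4} (hγ : Differentiable ℝ γ)
    (hunit : ∀ t, mink (deriv γ t) (deriv γ t) = 1) (hpos : ∀ t, 0 < deriv γ t 0) :
    Function.Surjective fun t => γ t 0 := by
  refine surjective_of_forall_le_deriv (differentiable_pi.1 hγ 0) one_pos fun t => ?_
  rw [(hasDerivAt_component hγ t 0).deriv]
  exact one_le_of_mink_self_eq_one (hunit t) (hpos t)

lemma weightedSumSquares_eq_mink_self (v : Vec4) :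
    QuadraticMap.weightedSumSquares ℝ ![(1 : ℝ), -1, -1, -1] v = mink v v := by
  simp only [QuadraticMap.weightedSumSquares_apply, Fin.sum_univ_four, mink, smul_eq_mul,
    Matrix.cons_val]
  ring

theorem tracking_delta_convergence_general {γ : ℝ → Vec4} (hγ : ContDiff ℝ ∞ γ)
    (hpos : ∀ t, 0 < deriv γ t 0) (hsurj : Function.Surjective fun t => γ t 0)
    (Q : QuadraticForm ℝ Vec4) (hQ : ∀ t, Q (deriv γ t) = 1)
    {C : Set (Vec4 → Mat4)} (hC : ∀ T ∈ C, IsMatterField T) (htr : Tracks C γ) :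
    ∃ (c : ℕ → ℝ) (T : ℕ → Vec4 → Mat4), (∀ n, 0 < c n) ∧ (∀ n, T n ∈ C) ∧
      ∀ x : Vec4 → Mat4, SmoothMatField x → HasCompactSupport x →
        Tendsto (fun n => c n * ∫ p, minner (T n p) (x p)) atTop
          (𝓝 (∫ t : ℝ, ∑ i, ∑ j, deriv γ t i * deriv γ t j * x (γ t) i j)) := by
  have hγ_diff : Differentiable ℝ γ := hγ.differentiable (by simp)
  obtain ⟨y, hy, hγy⟩ := exists_isTimeGraph hγ hpos hsurj
  have hrange : Set.range γ = Set.range y := by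
    rw [funext hγy]
    exact hsurj.range_comp y
  obtain ⟨c, T, hc, hT, hS⟩ := htr.exists_concentrates hC hy hrange
  obtain ⟨v, hv⟩ := hS.exists_deriv_eq_const hy
  have hderiv (t : ℝ) : deriv γ t = deriv γ t 0 • v :=
    (deriv_eq_smul_of_eq_comp_time hγ_diff hy hγy t).trans (by rw [hv])
  have hnorm (t : ℝ) : deriv γ t 0 * deriv γ t 0 * Q v = 1 := by
    rw [← smul_eq_mul _ (Q v), ← Q.map_smul, ← hderiv, hQ]
  have hconst (t : ℝ) : deriv γ t 0 = deriv γ 0 0 := by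
    have hQv : Q v ≠ 0 := right_ne_zero_of_mul_eq_one (hnorm 0)
    exact (mul_self_inj (hpos t).le (hpos 0).le).1
      (mul_right_cancel₀ hQv ((hnorm t).trans (hnorm 0).symm))
  refine ⟨fun n => deriv γ 0 0 * c n, T, fun n => mul_pos (hpos 0) (hc n), hT, fun x hx hxc => ?_⟩
  rw [integral_velocity_eq_const_mul hγ_diff hy hγy hsurj (hpos 0) hconst]
  refine ((hS.tendsto_pairing hy hx hxc).const_mul _).congr fun n => ?_
  rw [pairing_const_smul_left, ← mul_assoc, pairing]

/-- Tracking collections converge to a delta distribution on the curve. -/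
theorem tracking_delta_convergence (γ : ℝ → Vec4) (hγ : ContDiff ℝ (⊤ : ℕ∞) γ)
    (hunit : ∀ t : ℝ, mink (deriv γ t) (deriv γ t) = 1)
    (htl : ∀ t : ℝ, FutureTimelike (deriv γ t))
    (C : Set (Vec4 → Mat4))
    (hC : ∀ T ∈ C, SmoothMatField T ∧ SymValued T ∧ (∀ p, DEC (T p)) ∧ DivFree T)
    (htr : Tracks C γ) :
    ∃ (c : ℕ → ℝ) (Tn : ℕ → Vec4 → Mat4),
      (∀ n, 0 < c n) ∧ (∀ n, Tn n ∈ C) ∧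
      ∀ x : Vec4 → Mat4, SmoothMatField x → HasCompactSupport x → SymValued x →
        Tendsto (fun n => c n * ∫ p, minner (Tn n p) (x p)) atTop
          (𝓝 (∫ t : ℝ, ∑ i, ∑ j, deriv γ t i * deriv γ t j * x (γ t) i j)) := by
  obtain ⟨c, T, hc, hT, hlim⟩ := tracking_delta_convergence_general hγ (fun t => (htl t).2)
    (surjective_time_of_mink_self_eq_one (hγ.differentiable (by simp)) hunit fun t => (htl t).2)
    _ (fun t => (weightedSumSquares_eq_mink_self _).trans (hunit t))
    (fun T hT => ⟨(hC T hT).1, (hC T hT).2.1, (hC T hT).2.2.1, (hC T hT).2.2.2⟩) htr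
  exact ⟨c, T, hc, hT, fun x hx hxc _ => hlim x hx hxc⟩
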